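/- arXiv:2106.12249 — 2 statements merged into one kernel-verified Lean document; each statement's English description precedes it below -/
import Mathlib

section
/- Let G be an A-Stick N-overlap graph with no isolated vertices, ≺ an A-Stick order of G, and b_t ≺ b_s vertices of B with 1_s ≤ 1_t such that b_t ≺° b_s does not hold. Then either (a) there exist vertices b_x, b_y of B, consecutive among B in ≺, with b_t ⪯ b_x ≺ b_y ⪯ b_s, whose swap is good; or (b) there exists b_q ∈ B with b_t ≺ b_q ≺ b_s such that b_t ≺° b_q and 1_q < 1_s. -/
open Sum

/-- The relation `≺°` generated by the rules (O), (A), (TB), (FB), (T). -/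
inductive Prec (n : ℕ) (β : Type) (E : Fin n → β → Prop) (k : β → Fin n) :
    (Fin n ⊕ β) → (Fin n ⊕ β) → Prop
  | O : ∀ {i j : Fin n}, i < j → Prec n β E k (inl i) (inl j)
  | A : ∀ {t : Fin n} {j : β}, E t j → Prec n β E k (inl t) (inr j)
  | TB : ∀ {s t : Fin n} {h j : β}, s < t → t < k j → E s j → ¬ E t j → E t h →
      Prec n β E k (inr h) (inr j)
  | FB : ∀ {t : Fin n} {w h j : β}, Prec n β E k (inr w) (inr j) → k j < t → E t w →
      E t h → Prec n β E k (inr h) (inr j)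
  | T : ∀ {p q r : Fin n ⊕ β}, Prec n β E k p q → Prec n β E k q r → Prec n β E k p r
/-- A Stick order for `G = (A ∪ B, E)`: a linear (strict total) order on `A ∪ B` such that
every `A`-endpoint of an edge precedes its `B`-endpoint, and there is no forbidden
configuration `a' ≺ a ≺ b ≺ b'` with `a'b ∈ E`, `ab' ∈ E`, `ab ∉ E`. -/
def IsStickOrder (n : ℕ) (β : Type) (E : Fin n → β → Prop)
    (r : (Fin n ⊕ β) → (Fin n ⊕ β) → Prop) : Prop :=
  IsStrictTotalOrder (Fin n ⊕ β) r ∧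
  (∀ (a : Fin n) (b : β), E a b → r (inl a) (inr b)) ∧
  ¬ ∃ (a a' : Fin n) (b b' : β),
      r (inl a') (inl a) ∧ r (inl a) (inr b) ∧ r (inr b) (inr b') ∧
      E a' b ∧ E a b' ∧ ¬ E a b

/-- An A-Stick order: a Stick order whose restriction to `A` is the given order. -/
def IsAStickOrder (n : ℕ) (β : Type) (E : Fin n → β → Prop)
    (r : (Fin n ⊕ β) → (Fin n ⊕ β) → Prop) : Prop :=
  IsStickOrder n β E r ∧ ∀ i j : Fin n, r (inl i) (inl j) ↔ i < j
/-- `G` is an N-overlap graph: for all distinct `b_s, b_t ∈ B`, neither `N(b_s) ⊆ N(b_t)`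
nor `N(b_t) ⊆ N(b_s)`. -/
def NOverlap (n : ℕ) (β : Type) (E : Fin n → β → Prop) : Prop :=
  ∀ s t : β, s ≠ t → ¬ ∀ a : Fin n, E a s → E a t
/-- The rank of a vertex in an order `r`: the number of vertices strictly preceding it
(positions in the steady representation). -/
noncomputable def rankOf (n : ℕ) (β : Type) (r : (Fin n ⊕ β) → (Fin n ⊕ β) → Prop)
    (v : Fin n ⊕ β) : ℕ :=
  Set.ncard {w : Fin n ⊕ β | r w v}

open Classical in
/-- The total segment length of the steady Stick representation with origin order `r`, all
segments as short as possible: the segment of `b ∈ B` has length `rank b - rank a_{1_b}`,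
and the segment of `a ∈ A` has length `rank b* - rank a` where `b*` is the `r`-largest
neighbor of `a` (its rank is the sup of the ranks of the neighbors of `a`). -/
noncomputable def lengthOf (n : ℕ) (β : Type) [Fintype β] (E : Fin n → β → Prop)
    (one : β → Fin n) (r : (Fin n ⊕ β) → (Fin n ⊕ β) → Prop) : ℕ :=
  (∑ b : β, (rankOf n β r (inr b) - rankOf n β r (inl (one b)))) +
  ∑ a : Fin n,
    ((Finset.univ.filter (fun b : β => E a b)).sup (fun b => rankOf n β r (inr b))
      - rankOf n β r (inl a))
/-- The order obtained from `r` by moving `b_s` immediately before `a_v`, keeping all other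
relative positions unchanged. -/
def moveBefore (n : ℕ) (β : Type) (r : (Fin n ⊕ β) → (Fin n ⊕ β) → Prop)
    (s : β) (v : Fin n) : (Fin n ⊕ β) → (Fin n ⊕ β) → Prop :=
  fun x y =>
    (x = inr s ∧ y ≠ inr s ∧ (y = inl v ∨ r (inl v) y)) ∨
    (x ≠ inr s ∧ y = inr s ∧ r x (inl v)) ∨
    (x ≠ inr s ∧ y ≠ inr s ∧ r x y)

/-- An alternate chain (for the pair with right element `b_s`, starting at `a_c`):
a maximal sequence `a_{x_1} = a_c, b_{y_1}, a_{x_2}, …, a_{x_l}, b_{y_l}, a_{x_{l+1}}` with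
`a_{x_g} b_{y_g} ∈ E`, `a_{x_{g+1}} b_{y_g} ∈ E`, `x_{g+1} < x_g` for `1 ≤ g ≤ l`, and
`a_{x_g} b_s ∉ E` for `1 ≤ g ≤ l + 1`. -/
def IsAltChain (n : ℕ) (β : Type) (E : Fin n → β → Prop) (s : β) (c : Fin n)
    (l : ℕ) (x : ℕ → Fin n) (y : ℕ → β) : Prop :=
  x 1 = c ∧
  (∀ g : ℕ, 1 ≤ g → g ≤ l → E (x g) (y g) ∧ E (x (g + 1)) (y g) ∧ x (g + 1) < x g) ∧
  (∀ g : ℕ, 1 ≤ g → g ≤ l + 1 → ¬ E (x g) s) ∧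
  ¬ ∃ (b : β) (a : Fin n), E (x (l + 1)) b ∧ E a b ∧ a < x (l + 1) ∧ ¬ E a s

/-- `a_v` is the limit `v_st` of `b_s` and `b_t`: with `c = min {i | a_i b_t ∈ E, a_i b_s ∉ E}`,
`v` is the minimum over all alternate chains of the index of the last chain element. -/
def IsLimit (n : ℕ) (β : Type) (E : Fin n → β → Prop) (t s : β) (v : Fin n) : Prop :=
  ∃ c : Fin n, (E c t ∧ ¬ E c s ∧ ∀ i : Fin n, E i t → ¬ E i s → c ≤ i) ∧
    (∃ (l : ℕ) (x : ℕ → Fin n) (y : ℕ → β), IsAltChain n β E s c l x y ∧ x (l + 1) = v) ∧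
    (∀ (l : ℕ) (x : ℕ → Fin n) (y : ℕ → β), IsAltChain n β E s c l x y → v ≤ x (l + 1))

/-- The swap of `b_t` and `b_s` (in the order `r`) is good: moving `b_s` immediately before
the limit `a_{v_st}` yields again an A-Stick order whose steady shortest representation has
strictly smaller total segment length. -/
def GoodSwap (n : ℕ) (β : Type) [Fintype β] (E : Fin n → β → Prop) (one : β → Fin n)
    (r : (Fin n ⊕ β) → (Fin n ⊕ β) → Prop) (t s : β) : Prop :=
  ∃ v : Fin n, IsLimit n β E t s v ∧
    IsAStickOrder n β E (moveBefore n β r s v) ∧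
    lengthOf n β E one (moveBefore n β r s v) < lengthOf n β E one r

/-!
Among the pairs in the interval from `b_t` to `b_s` to which the theorem applies, choose one with
the fewest vertices of `B` in between. By minimality every vertex in between precedes the right
end in `≺°` and starts no earlier than the left end; if there were one, the excluded configuration
would transfer the edges of a derivation of its `≺°`-relation to the left end, which would then
precede the right end in `≺°` as well. So the chosen pair `b_t`, `b_s` is consecutive.

Every vertex of `A` on an alternate chain lies to the right of `a_{k_s}`: the first one that does
not would either violate the N-overlap condition or give `b_t ≺° b_s` by (TB) followed by (FB) along
the chain. Hence `b_s` can be moved before the limit. Its own segment shrinks by the number of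
vertices it jumps over, while the segments of those among them that lie in `B` grow by at most one
each. As the limit itself is jumped over and no segment of `A` grows, the total length decreases.
-/

open Relation

section

variable {n : ℕ} {β : Type} {E : Fin n → β → Prop} {k one : β → Fin n}
  {r : (Fin n ⊕ β) → (Fin n ⊕ β) → Prop}

namespace IsAStickOrder

theorem lt_iff (hr : IsAStickOrder n β E r) {i j : Fin n} : r (inl i) (inl j) ↔ i < j :=
  hr.2 i j

theorem rel_of_edge (hr : IsAStickOrder n β E r) {a : Fin n} {b : β} (hab : E a b) :
    r (inl a) (inr b) :=
  hr.1.2.1 a b hab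

theorem trans (hr : IsAStickOrder n β E r) {x y z : Fin n ⊕ β} (hxy : r x y) (hyz : r y z) :
    r x z :=
  have := hr.1.1
  trans_of r hxy hyz

theorem irrefl (hr : IsAStickOrder n β E r) (x : Fin n ⊕ β) : ¬ r x x :=
  have := hr.1.1
  irrefl_of r x

theorem asymm (hr : IsAStickOrder n β E r) {x y : Fin n ⊕ β} (hxy : r x y) : ¬ r y x :=
  fun hyx => hr.irrefl x (hr.trans hxy hyx)

theorem rel_of_not_rel (hr : IsAStickOrder n β E r) {x y : Fin n ⊕ β} (hne : x ≠ y)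
    (hxy : ¬ r x y) : r y x :=
  have := hr.1.1
  ((trichotomous_of r x y).resolve_left hxy).resolve_left hne

theorem rel_of_le_of_rel (hr : IsAStickOrder n β E r) {i j : Fin n} {x : Fin n ⊕ β}
    (hij : i ≤ j) (hj : r (inl j) x) : r (inl i) x := by
  rcases hij.eq_or_lt with rfl | hlt
  · exact hj
  · exact hr.trans (hr.lt_iff.2 hlt) hj

theorem edge_of_forbidden (hr : IsAStickOrder n β E r) {a a' : Fin n} {b b' : β}
    (ha : a' < a) (hab : r (inl a) (inr b)) (hb : r (inr b) (inr b')) (ha'b : E a' b)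
    (hab' : E a b') : E a b := by
  by_contra h
  exact hr.1.2.2 ⟨a, a', b, b', hr.lt_iff.2 ha, hab, hb, ha'b, hab', h⟩

theorem edge_of_first_le (hr : IsAStickOrder n β E r)
    (hone : ∀ j, IsLeast {i | E i j} (one j)) {a : Fin n} {b b' : β} (hle : one b ≤ one b')
    (hb : r (inr b) (inr b')) (hab : r (inl a) (inr b)) (hab' : E a b') : E a b := by
  rcases (hle.trans ((hone b').2 hab')).eq_or_lt with h | h
  · exact h ▸ (hone b).1
  · exact hr.edge_of_forbidden h hab hb (hone b).1 hab'

theorem rel_last_of_first_le (hr : IsAStickOrder n β E r)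
    (hk : ∀ j, IsGreatest {i | E i j} (k j)) (hone : ∀ j, IsLeast {i | E i j} (one j))
    (hN : NOverlap n β E) {b b' : β} (hle : one b ≤ one b') (hb : r (inr b) (inr b')) :
    r (inr b) (inl (k b')) := by
  by_contra hkb
  replace hkb := hr.rel_of_not_rel (by simp) hkb
  refine hN b' b (fun h => hr.irrefl _ (h ▸ hb)) fun a hab' => ?_
  exact hr.edge_of_first_le hone hle hb (hr.rel_of_le_of_rel ((hk b').2 hab') hkb) hab'

end IsAStickOrder

namespace Prec

theorem rel (hr : IsAStickOrder n β E r) (hk : ∀ j, IsGreatest {i | E i j} (k j))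
    {p q : Fin n ⊕ β} (h : Prec n β E k p q) : r p q := by
  induction h with
  | O hij => exact hr.lt_iff.2 hij
  | A htj => exact hr.rel_of_edge htj
  | @TB s t h j hst htk hsj htj hth =>
    by_contra hhj
    have hjh := hr.rel_of_not_rel (by simpa using fun e : h = j => htj (e ▸ hth)) hhj
    have htj' := hr.rel_of_le_of_rel htk.le (hr.rel_of_edge (hk j).1)
    exact htj (hr.edge_of_forbidden hst htj' hjh hsj hth)
  | @FB t w h j _ hkt htw hth hwj =>
    have htj : ¬ E t j := fun htj => hkt.not_ge ((hk j).2 htj)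
    by_contra hhj
    have hjh := hr.rel_of_not_rel (by simpa using fun e : h = j => htj (e ▸ hth)) hhj
    exact htj (hr.edge_of_forbidden hkt (hr.trans (hr.rel_of_edge htw) hwj) hjh (hk j).1 hth)
  | T _ _ hpq hqr => exact hr.trans hpq hqr

theorem exists_eq_inr {p q : Fin n ⊕ β} (h : Prec n β E k p q) :
    ∀ b, p = inr b → ∃ b', q = inr b' := by
  induction h with
  | O | A => simp
  | TB | FB => simp
  | T _ _ hpq hqr =>
    intro b hb
    obtain ⟨w, hw⟩ := hpq b hb
    exact hqr w hw

theorem left_induction {j : β} {P : β → Prop}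
    (tb : ∀ {s t h}, s < t → t < k j → E s j → ¬ E t j → E t h → P h)
    (fb : ∀ {t w h}, Prec n β E k (inr w) (inr j) → P w → k j < t → E t w → E t h → P h)
    (tr : ∀ {h w}, Prec n β E k (inr h) (inr w) → Prec n β E k (inr w) (inr j) → P w → P h)
    {u : β} (hu : Prec n β E k (inr u) (inr j)) : P u := by
  generalize hp : (inr u : Fin n ⊕ β) = p, hq : (inr j : Fin n ⊕ β) = q at hu
  induction hu generalizing u with
  | O | A => cases hp
  | TB hst htk hsj htj hth =>
    cases hp
    cases hq
    exact tb hst htk hsj htj hth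
  | FB hwj hkt htw hth ih =>
    cases hp
    cases hq
    exact fb hwj (ih rfl rfl) hkt htw hth
  | T hpz hzq _ ih =>
    obtain ⟨w, rfl⟩ := hpz.exists_eq_inr u hp.symm
    subst hp hq
    exact tr hpz hzq (ih rfl rfl)

theorem of_first_le (hr : IsAStickOrder n β E r) (hk : ∀ j, IsGreatest {i | E i j} (k j))
    (hone : ∀ j, IsLeast {i | E i j} (one j)) {t s u : β} (hkt : r (inl (k s)) (inr t))
    (hfirst : ∀ w, r (inr t) (inr w) → r (inr w) (inr s) → one t ≤ one w)
    (htu : r (inr t) (inr u)) (hus : Prec n β E k (inr u) (inr s)) :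
    Prec n β E k (inr t) (inr s) := by
  have edge_left : ∀ {a h}, r (inr t) (inr h) → Prec n β E k (inr h) (inr s) →
      r (inl a) (inr t) → E a h → E a t := fun hth hhs =>
    hr.edge_of_first_le hone (hfirst _ hth (hhs.rel hr hk)) hth
  refine left_induction (P := fun u => r (inr t) (inr u) → Prec n β E k (inr t) (inr s))
    ?_ ?_ ?_ hus htu
  · intro i a h hia hak his has hah hth
    exact .TB hia hak his has (edge_left hth (.TB hia hak his has hah)
      (hr.rel_of_le_of_rel hak.le hkt) hah)
  · intro a w h hws ih hka haw hah hth
    by_cases htw : r (inr t) (inr w)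
    · exact ih htw
    by_cases hwt : w = t
    · exact hwt ▸ hws
    have hat := hr.trans (hr.rel_of_edge haw) (hr.rel_of_not_rel (by simpa using Ne.symm hwt) htw)
    exact .FB hws hka haw (edge_left hth (.FB hws hka haw hah) hat hah)
  · intro h w hhw _ ih hth
    exact ih (hr.trans hth (hhw.rel hr hk))

end Prec

/-- The pairs `(b_t, b_s)` to which the theorem applies: `b_t ≺ b_s` and `1_s ≤ 1_t`, but
`b_t ≺° b_s` fails. -/
structure IsUnforcedPair (E : Fin n → β → Prop) (k one : β → Fin n)
    (r : (Fin n ⊕ β) → (Fin n ⊕ β) → Prop) (t s : β) : Prop where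
  rel : r (inr t) (inr s)
  first_le : one s ≤ one t
  not_prec : ¬ Prec n β E k (inr t) (inr s)

/-- The vertices of `B` strictly between `b_t` and `b_s` in the order `r`. -/
def between (r : (Fin n ⊕ β) → (Fin n ⊕ β) → Prop) (t s : β) : Set β :=
  {u | r (inr t) (inr u) ∧ r (inr u) (inr s)}

namespace IsUnforcedPair

variable {t s : β}

theorem exists_edge_left_not_right (h : IsUnforcedPair E k one r t s)
    (hr : IsAStickOrder n β E r) (hN : NOverlap n β E) : ∃ c, E c t ∧ ¬ E c s := by
  simpa using hN t s fun e => hr.irrefl _ (e ▸ h.rel)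

theorem last_lt (h : IsUnforcedPair E k one r t s) (hk : ∀ j, IsGreatest {i | E i j} (k j))
    (hone : ∀ j, IsLeast {i | E i j} (one j)) {c : Fin n} (hct : E c t) (hcs : ¬ E c s) :
    k s < c := by
  have hfirst : one s < c :=
    lt_of_le_of_ne (h.first_le.trans ((hone t).2 hct)) fun e => hcs (e ▸ (hone s).1)
  by_contra! hck
  have hlast : c < k s := lt_of_le_of_ne hck fun e => hcs (e ▸ (hk s).1)
  exact h.not_prec (.TB hfirst hlast (hone s).1 hcs hct)

theorem last_rel (h : IsUnforcedPair E k one r t s) (hr : IsAStickOrder n β E r)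
    (hk : ∀ j, IsGreatest {i | E i j} (k j)) (hone : ∀ j, IsLeast {i | E i j} (one j))
    (hN : NOverlap n β E) : r (inl (k s)) (inr t) := by
  obtain ⟨c, hct, hcs⟩ := h.exists_edge_left_not_right hr hN
  exact hr.rel_of_le_of_rel (h.last_lt hk hone hct hcs).le (hr.rel_of_edge hct)

theorem between_eq_empty (h : IsUnforcedPair E k one r t s) (hr : IsAStickOrder n β E r)
    (hk : ∀ j, IsGreatest {i | E i j} (k j)) (hone : ∀ j, IsLeast {i | E i j} (one j))
    (hN : NOverlap n β E) (hleft : ∀ u ∈ between r t s, ¬ IsUnforcedPair E k one r t u)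
    (hright : ∀ u ∈ between r t s, ¬ IsUnforcedPair E k one r u s) : between r t s = ∅ := by
  have hkt := h.last_rel hr hk hone hN
  have hprec : ∀ u ∈ between r t s, Prec n β E k (inr u) (inr s) := by
    intro u hu
    by_contra hus
    refine hright u hu ⟨hu.2, ?_, hus⟩
    by_contra! hlt
    exact hr.asymm hkt (hr.trans hu.1 (hr.rel_last_of_first_le hk hone hN hlt.le hu.2))
  refine Set.eq_empty_of_forall_notMem fun u hu => h.not_prec ?_
  refine Prec.of_first_le hr hk hone hkt (fun w htw hws => ?_) hu.1 (hprec u hu)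
  by_contra! hlt
  refine hleft w ⟨htw, hws⟩ ⟨htw, hlt.le, fun htw' => h.not_prec ?_⟩
  exact htw'.T (hprec w ⟨htw, hws⟩)

theorem exists_between_eq_empty [Finite β] (h : IsUnforcedPair E k one r t s)
    (hr : IsAStickOrder n β E r) (hk : ∀ j, IsGreatest {i | E i j} (k j))
    (hone : ∀ j, IsLeast {i | E i j} (one j)) (hN : NOverlap n β E) :
    ∃ x y, (x = t ∨ r (inr t) (inr x)) ∧ (y = s ∨ r (inr y) (inr s)) ∧
      IsUnforcedPair E k one r x y ∧ between r x y = ∅ := by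
  obtain ⟨⟨x, y⟩, ⟨hx, hy, hxy⟩, hmin⟩ := exists_minimalFor_of_wellFoundedLT
    (fun p : β × β => (p.1 = t ∨ r (inr t) (inr p.1)) ∧ (p.2 = s ∨ r (inr p.2) (inr s)) ∧
      IsUnforcedPair E k one r p.1 p.2)
    (fun p => (between r p.1 p.2).ncard) ⟨(t, s), .inl rfl, .inl rfl, h⟩
  refine ⟨x, y, hx, hy, hxy, hxy.between_eq_empty hr hk hone hN (fun u hu hxu => ?_)
    fun u hu huy => ?_⟩
  · have hlt : (between r x u).ncard < (between r x y).ncard :=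
      Set.ncard_lt_ncard ⟨fun w hw => ⟨hw.1, hr.trans hw.2 hu.2⟩,
        fun hsub => hr.irrefl _ (hsub hu).2⟩
    have hus : u = s ∨ r (inr u) (inr s) := .inr (hy.elim (· ▸ hu.2) (hr.trans hu.2))
    exact hlt.not_ge (hmin (j := (x, u)) ⟨hx, hus, hxu⟩ hlt.le)
  · have hlt : (between r u y).ncard < (between r x y).ncard :=
      Set.ncard_lt_ncard ⟨fun w hw => ⟨hr.trans hu.1 hw.1, hw.2⟩,
        fun hsub => hr.irrefl _ (hsub hu).1⟩
    have htu : u = t ∨ r (inr t) (inr u) := .inr (hx.elim (· ▸ hu.1) fun htx => hr.trans htx hu.1)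
    exact hlt.not_ge (hmin (j := (u, y)) ⟨htu, hy, huy⟩ hlt.le)

end IsUnforcedPair

/-- One step `a_x, b, a_{x'}` of an alternate chain with right element `b_s`. -/
def ChainStep (E : Fin n → β → Prop) (s : β) (x x' : Fin n) : Prop :=
  x' < x ∧ ¬ E x' s ∧ ∃ b, E x b ∧ E x' b

section Chain

variable {t s : β} {c v z : Fin n}

theorem exists_seq_of_reflTransGen_chainStep (hcs : ¬ E c s)
    (h : ReflTransGen (ChainStep E s) c z) :
    ∃ (l : ℕ) (x : ℕ → Fin n) (y : ℕ → β), x 1 = c ∧ x (l + 1) = z ∧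
      (∀ g : ℕ, 1 ≤ g → g ≤ l → E (x g) (y g) ∧ E (x (g + 1)) (y g) ∧ x (g + 1) < x g) ∧
      (∀ g : ℕ, 1 ≤ g → g ≤ l + 1 → ¬ E (x g) s) := by
  induction h with
  | refl => exact ⟨0, fun _ => c, fun _ => s, rfl, rfl, by omega, fun _ _ _ => hcs⟩
  | @tail z z' _ hstep ih =>
    obtain ⟨l, x, y, hx1, hxl, hE, hs⟩ := ih
    obtain ⟨hlt, hz's, b, hzb, hz'b⟩ := hstep
    refine ⟨l + 1, fun g => if g ≤ l + 1 then x g else z', fun g => if g ≤ l then y g else b,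
      by simp [hx1], by simp, fun g hg hgl => ?_, fun g hg _ => ?_⟩
    · rcases Nat.lt_or_ge l g with h | h
      · obtain rfl : g = l + 1 := by omega
        simp [hxl, hlt, hzb, hz'b]
      · simpa [h, hgl] using hE g hg h
    · by_cases h : g ≤ l + 1
      · simpa [h] using hs g hg h
      · simpa [h] using hz's

theorem IsAltChain.reflTransGen {l : ℕ} {x : ℕ → Fin n} {y : ℕ → β}
    (h : IsAltChain n β E s c l x y) : ReflTransGen (ChainStep E s) c (x (l + 1)) := by
  obtain ⟨hx1, hE, hs, -⟩ := h
  have reach : ∀ g ≤ l, ReflTransGen (ChainStep E s) c (x (g + 1)) := by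
    intro g
    induction g with
    | zero => exact fun _ => hx1 ▸ .refl
    | succ g ih =>
      intro hg
      obtain ⟨hxy, hxy', hlt⟩ := hE (g + 1) (by omega) hg
      exact (ih (by omega)).tail ⟨hlt, hs _ (by omega) (by omega), _, hxy, hxy'⟩
  exact reach l le_rfl

theorem isLimit_of_isLeast (hc : IsLeast {i | E i t ∧ ¬ E i s} c)
    (hv : IsLeast {z | ReflTransGen (ChainStep E s) c z} v) : IsLimit n β E t s v := by
  refine ⟨c, ⟨hc.1.1, hc.1.2, fun i hit his => hc.2 ⟨hit, his⟩⟩, ?_,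
    fun l x y h => hv.2 h.reflTransGen⟩
  obtain ⟨l, x, y, hx1, rfl, hE, hs⟩ := exists_seq_of_reflTransGen_chainStep hc.1.2 hv.1
  refine ⟨l, x, y, ⟨hx1, hE, hs, ?_⟩, rfl⟩
  rintro ⟨b, a, hxb, hab, hlt, has⟩
  exact hlt.not_ge (hv.2 (hv.1.tail ⟨hlt, has, b, hxb, hab⟩))

theorem le_of_reflTransGen_chainStep (h : ReflTransGen (ChainStep E s) c z) : z ≤ c := by
  induction h with
  | refl => exact le_rfl
  | tail _ hstep ih => exact hstep.1.le.trans ih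

theorem ChainStep.last_lt {z' : Fin n} (h : ChainStep E s z z') (hr : IsAStickOrder n β E r)
    (hk : ∀ j, IsGreatest {i | E i j} (k j)) (hone : ∀ j, IsLeast {i | E i j} (one j))
    (hN : NOverlap n β E) (hzs : r (inl z) (inr s)) (hkz : k s < z)
    (hprec : ∀ b, E z b → ¬ Prec n β E k (inr b) (inr s)) : k s < z' := by
  obtain ⟨-, hz's, b, hzb, hz'b⟩ := h
  by_contra! hle
  have hz'k : z' < k s := lt_of_le_of_ne hle fun e => hz's (e ▸ (hk s).1)
  rcases lt_or_ge (one s) z' with hlt | hge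
  · exact hprec b hzb (.TB hlt hz'k (hone s).1 hz's hz'b)
  · have hnzs : ¬ E z s := fun hzs' => hkz.not_ge ((hk s).2 hzs')
    have hbs : r (inr b) (inr s) := by
      refine hr.rel_of_not_rel (by simpa using fun e : s = b => hnzs (e ▸ hzb)) fun hsb => hnzs ?_
      exact hr.edge_of_forbidden hkz hzs hsb (hk s).1 hzb
    have hbk := hr.rel_last_of_first_le hk hone hN (((hone b).2 hz'b).trans hge) hbs
    exact hr.asymm hbk (hr.rel_of_le_of_rel hkz.le (hr.rel_of_edge hzb))

theorem IsUnforcedPair.last_lt_of_reflTransGen (h : IsUnforcedPair E k one r t s)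
    (hr : IsAStickOrder n β E r) (hk : ∀ j, IsGreatest {i | E i j} (k j))
    (hone : ∀ j, IsLeast {i | E i j} (one j)) (hN : NOverlap n β E) (hct : E c t)
    (hcs : ¬ E c s) (hz : ReflTransGen (ChainStep E s) c z) : k s < z := by
  suffices k s < z ∧ ∀ b, E z b → ¬ Prec n β E k (inr b) (inr s) from this.1
  induction hz with
  | refl =>
    have hkc := h.last_lt hk hone hct hcs
    exact ⟨hkc, fun b hcb hbs => h.not_prec (.FB hbs hkc hcb hct)⟩
  | @tail z z' hz hstep ih =>
    obtain ⟨hkz, hprec⟩ := ih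
    have hzs : r (inl z) (inr s) := hr.rel_of_le_of_rel (le_of_reflTransGen_chainStep hz)
      (hr.trans (hr.rel_of_edge hct) h.rel)
    have hkz' := hstep.last_lt hr hk hone hN hzs hkz hprec
    obtain ⟨-, -, b, hzb, hz'b⟩ := hstep
    exact ⟨hkz', fun b' hb' hp => hprec b hzb (.FB hp hkz' hb' hz'b)⟩

theorem reflTransGen_chainStep_of_edge (hr : IsAStickOrder n β E r) (hct : E c t)
    (hz : ReflTransGen (ChainStep E s) c z) {a : Fin n} {b : β} (haz : a < z) (has : ¬ E a s)
    (hab : E a b) (hzb : r (inl z) (inr b)) (hbt : b = t ∨ r (inr b) (inr t)) :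
    ReflTransGen (ChainStep E s) c a := by
  induction hz with
  | refl =>
    have hcb : E c b := by
      rcases hbt with rfl | hbt
      · exact hct
      · exact hr.edge_of_forbidden haz hzb hbt hab hct
    exact .single ⟨haz, has, b, hcb, hab⟩
  | @tail z z' hz hstep ih =>
    by_cases hzb' : r (inl z) (inr b)
    · exact ih (haz.trans hstep.1) hzb'
    · obtain ⟨-, -, d, hzd, hz'd⟩ := id hstep
      have hbd := hr.trans (hr.rel_of_not_rel (by simp) hzb') (hr.rel_of_edge hzd)
      have hz'b : E z' b := hr.edge_of_forbidden haz hzb hbd hab hz'd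
      exact (hz.tail hstep).tail ⟨haz, has, b, hz'b, hab⟩

end Chain

/-- `b_s` can be moved to the left, immediately before `a_v`: all its neighbors come before `a_v`,
and the vertices of `B` it jumps over have, among the vertices before `a_v`, only neighbors that
are also neighbors of `b_s`. -/
structure IsMovableBefore (E : Fin n → β → Prop) (r : (Fin n ⊕ β) → (Fin n ⊕ β) → Prop)
    (s : β) (v : Fin n) : Prop where
  rel : r (inl v) (inr s)
  lt : ∀ a, E a s → a < v
  edge : ∀ b a, r (inl v) (inr b) → r (inr b) (inr s) → a < v → E a b → E a s

theorem IsUnforcedPair.isMovableBefore {t s : β} {c v : Fin n}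
    (h : IsUnforcedPair E k one r t s) (hr : IsAStickOrder n β E r)
    (hk : ∀ j, IsGreatest {i | E i j} (k j)) (hone : ∀ j, IsLeast {i | E i j} (one j))
    (hN : NOverlap n β E) (hbetween : between r t s = ∅) (hct : E c t) (hcs : ¬ E c s)
    (hv : IsLeast {z | ReflTransGen (ChainStep E s) c z} v) : IsMovableBefore E r s v where
  rel := hr.rel_of_le_of_rel (le_of_reflTransGen_chainStep hv.1)
    (hr.trans (hr.rel_of_edge hct) h.rel)
  lt a has := ((hk s).2 has).trans_lt (h.last_lt_of_reflTransGen hr hk hone hN hct hcs hv.1)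
  edge b a hvb hbs hav hab := by
    have hbt : b = t ∨ r (inr b) (inr t) := by
      by_contra! hnot
      have htb := hr.rel_of_not_rel (by simpa using hnot.1) hnot.2
      exact Set.eq_empty_iff_forall_notMem.1 hbetween b ⟨htb, hbs⟩
    by_contra has
    exact hav.not_ge (hv.2 (reflTransGen_chainStep_of_edge hr hct hv.1 hav has hab hvb hbt))

theorem moveBefore_iff {s : β} {v : Fin n} {w x : Fin n ⊕ β} (hw : w ≠ inr s) :
    moveBefore n β r s v x w ↔
      (x = inr s ∧ (w = inl v ∨ r (inl v) w)) ∨ (x ≠ inr s ∧ r x w) := by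
  simp [moveBefore, hw]

section Order

variable {s : β} {v : Fin n} {w : Fin n ⊕ β} [IsStrictTotalOrder (Fin n ⊕ β) r]

-- Give `b_s` the key directly below that of `a_v` in a lexicographic order.
open Classical in
instance isStrictTotalOrder_moveBefore :
    IsStrictTotalOrder (Fin n ⊕ β) (moveBefore n β r s v) := by
  let key : (Fin n ⊕ β) → (Fin n ⊕ β) × ℕ := fun x => if x = inr s then (inl v, 0) else (x, 1)
  have key_injective : key.Injective := by
    intro x y
    simp only [key]
    split_ifs <;> simp_all
  have key_lex {x y} : Prod.Lex r (· < ·) (key x) (key y) ↔ moveBefore n β r s v x y := by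
    have hv := irrefl_of r (inl v)
    by_cases hx : x = inr s <;> by_cases hy : y = inr s <;>
      simp [key, moveBefore, Prod.lex_def, hx, hy, or_comm, eq_comm, hv]
  have : IsStrictTotalOrder _ (Prod.Lex r (· < · : ℕ → ℕ → Prop)) := { }
  exact RelEmbedding.isStrictTotalOrder (s := Prod.Lex r (· < ·)) ⟨⟨key, key_injective⟩, key_lex⟩

/-- The vertices over which `b_s` jumps when it is moved immediately before `a_v`. -/
def passed (r : (Fin n ⊕ β) → (Fin n ⊕ β) → Prop) (s : β) (v : Fin n) : Set (Fin n ⊕ β) :=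
  {w | r w (inr s) ∧ ¬ r w (inl v)}

theorem moveBefore_self_iff (hvs : r (inl v) (inr s)) :
    moveBefore n β r s v w (inr s) ↔ r w (inl v) := by
  have : r w (inl v) → w ≠ inr s := fun hwv hw => asymm_of r hvs (hw ▸ hwv)
  simpa [moveBefore] using this

theorem rankOf_moveBefore_self (hvs : r (inl v) (inr s)) :
    rankOf n β (moveBefore n β r s v) (inr s) = rankOf n β r (inl v) := by
  simp only [rankOf, moveBefore_self_iff hvs]

theorem rankOf_moveBefore_of_notMem (hvs : r (inl v) (inr s)) (hws : w ≠ inr s)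
    (hw : w ∉ passed r s v) : rankOf n β (moveBefore n β r s v) w = rankOf n β r w := by
  have not_rel (hvw : w = inl v ∨ r (inl v) w) : ¬ r w (inr s) := by
    intro hw'
    rcases hvw with rfl | hvw
    · exact hw ⟨hw', irrefl_of r _⟩
    · exact hw ⟨hw', asymm_of r hvw⟩
  have rel_iff : r (inr s) w ↔ w = inl v ∨ r (inl v) w := by
    refine ⟨fun hsw => .inr (trans_of r hvs hsw), fun hvw => ?_⟩
    exact ((trichotomous_of r _ _).resolve_left (not_rel hvw)).resolve_left hws
  simp only [rankOf, moveBefore_iff hws, ← rel_iff]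
  congr 1
  ext x
  simp only [Set.mem_ofPred_eq]
  by_cases hx : x = inr s <;> simp [hx]

variable [Finite β]

theorem rankOf_lt_rankOf {x y : Fin n ⊕ β} (hxy : r x y) : rankOf n β r x < rankOf n β r y :=
  Set.ncard_lt_ncard ⟨fun _ hz => trans_of r hz hxy, fun hsub => irrefl_of r x (hsub hxy)⟩

theorem rankOf_moveBefore_of_mem (hw : w ∈ passed r s v) :
    rankOf n β (moveBefore n β r s v) w = rankOf n β r w + 1 := by
  obtain ⟨hws, hwv⟩ := hw
  have hne : w ≠ inr s := fun h => irrefl_of r _ (h ▸ hws)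
  have hvw : w = inl v ∨ r (inl v) w := (trichotomous_of r w (inl v)).resolve_left hwv
  have hins : {x | moveBefore n β r s v x w} = insert (inr s) {x | r x w} := by
    ext x
    simp only [moveBefore_iff hne, Set.mem_ofPred_eq, Set.mem_insert_iff]
    tauto
  have hs : inr s ∉ {x | r x w} := asymm_of r hws
  rw [rankOf, rankOf, hins, Set.ncard_insert_of_notMem hs]

theorem rankOf_eq_add_ncard_passed (hvs : r (inl v) (inr s)) :
    rankOf n β r (inr s) = rankOf n β r (inl v) + (passed r s v).ncard := by
  have hsub : {x | r x (inl v)} ⊆ {x | r x (inr s)} := fun _ hx => trans_of r hx hvs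
  rw [add_comm]
  exact (Set.ncard_sdiff_add_ncard_of_subset hsub).symm

end Order

theorem IsMovableBefore.isAStickOrder_moveBefore {s : β} {v : Fin n}
    (h : IsMovableBefore E r s v) (hr : IsAStickOrder n β E r) :
    IsAStickOrder n β E (moveBefore n β r s v) := by
  have := hr.1.1
  have inl_iff {x : Fin n ⊕ β} {a : Fin n} (hx : x ≠ inr s) :
      moveBefore n β r s v x (inl a) ↔ r x (inl a) := by simp [moveBefore_iff, hx]
  have inr_iff {x : Fin n ⊕ β} {b : β} (hb : b ≠ s) (hx : x ≠ inr s) :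
      moveBefore n β r s v x (inr b) ↔ r x (inr b) := by simp [moveBefore_iff, hx, hb]
  refine ⟨⟨inferInstance, fun a b hab => ?_, ?_⟩, fun i j => (inl_iff (by simp)).trans hr.lt_iff⟩
  · by_cases hb : b = s
    · subst hb
      exact (moveBefore_self_iff h.rel).2 (hr.lt_iff.2 (h.lt a hab))
    · exact (inr_iff hb (by simp)).2 (hr.rel_of_edge hab)
  rintro ⟨a, a', b, b', haa, hab, hbb, ha'b, hab', hnab⟩
  replace haa : a' < a := hr.lt_iff.1 ((inl_iff (by simp)).1 haa)
  by_cases hb : b = s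
  · subst hb
    have hav : r (inl a) (inl v) := (moveBefore_self_iff h.rel).1 hab
    have hne : b' ≠ b := fun e => hnab (e ▸ hab')
    have hvb' : r (inl v) (inr b') := by simpa [moveBefore_iff, hne] using hbb
    by_cases hb'b : r (inr b') (inr b)
    · exact hnab (h.edge b' a hvb' hb'b (hr.lt_iff.1 hav) hab')
    · have hbb' := hr.rel_of_not_rel (by simpa using hne) hb'b
      exact hnab (hr.edge_of_forbidden haa (hr.trans hav h.rel) hbb' ha'b hab')
  · have hab₀ : r (inl a) (inr b) := (inr_iff hb (by simp)).1 hab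
    have hbb₀ : r (inr b) (inr b') := by
      by_cases hb' : b' = s
      · subst hb'
        exact hr.trans ((moveBefore_self_iff h.rel).1 hbb) h.rel
      · exact (inr_iff hb' (by simpa using hb)).1 hbb
    exact hnab (hr.edge_of_forbidden haa hab₀ hbb₀ ha'b hab')

/-- The length of the shortest segment of `b ∈ B` in the steady representation. -/
noncomputable def segmentLengthB (one : β → Fin n) (r : (Fin n ⊕ β) → (Fin n ⊕ β) → Prop)
    (b : β) : ℕ :=
  rankOf n β r (inr b) - rankOf n β r (inl (one b))

open Classical in
/-- The largest rank of a neighbor of `a ∈ A`; it is `0` if `a` is isolated. -/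
noncomputable def lastRank [Fintype β] (E : Fin n → β → Prop)
    (r : (Fin n ⊕ β) → (Fin n ⊕ β) → Prop) (a : Fin n) : ℕ :=
  (Finset.univ.filter (fun b => E a b)).sup fun b => rankOf n β r (inr b)

/-- The length of the shortest segment of `a ∈ A` in the steady representation; by truncated
subtraction it is `0` if `a` is isolated. -/
noncomputable def segmentLengthA [Fintype β] (E : Fin n → β → Prop)
    (r : (Fin n ⊕ β) → (Fin n ⊕ β) → Prop) (a : Fin n) : ℕ :=
  lastRank E r a - rankOf n β r (inl a)

theorem lengthOf_eq_sum_add_sum [Fintype β] :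
    lengthOf n β E one r = ∑ b, segmentLengthB one r b + ∑ a, segmentLengthA E r a :=
  rfl

section Length

variable {s : β} {v : Fin n} [IsStrictTotalOrder (Fin n ⊕ β) r]

theorem segmentLengthB_moveBefore_self_add [Finite β] (hvs : r (inl v) (inr s))
    (hsv : r (inl (one s)) (inl v)) :
    segmentLengthB one (moveBefore n β r s v) s + (passed r s v).ncard =
      segmentLengthB one r s := by
  have hone : rankOf n β (moveBefore n β r s v) (inl (one s)) = rankOf n β r (inl (one s)) :=
    rankOf_moveBefore_of_notMem hvs (by simp) fun hmem => hmem.2 hsv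
  have hlt := rankOf_lt_rankOf hsv
  rw [segmentLengthB, segmentLengthB, rankOf_moveBefore_self hvs, hone,
    rankOf_eq_add_ncard_passed hvs]
  omega

theorem rankOf_le_rankOf_moveBefore [Finite β] {w : Fin n ⊕ β} (hvs : r (inl v) (inr s))
    (hws : w ≠ inr s) : rankOf n β r w ≤ rankOf n β (moveBefore n β r s v) w := by
  by_cases hw : w ∈ passed r s v
  · exact (rankOf_moveBefore_of_mem hw).ge.trans' (Nat.le_succ _)
  · exact (rankOf_moveBefore_of_notMem hvs hws hw).ge

open Classical in
theorem segmentLengthB_moveBefore_le [Finite β] {b : β} (hvs : r (inl v) (inr s))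
    (hb : b ≠ s) : segmentLengthB one (moveBefore n β r s v) b ≤
      segmentLengthB one r b + if inr b ∈ passed r s v then 1 else 0 := by
  have hone : rankOf n β r (inl (one b)) ≤ rankOf n β (moveBefore n β r s v) (inl (one b)) :=
    rankOf_le_rankOf_moveBefore hvs (by simp)
  rw [segmentLengthB, segmentLengthB]
  split_ifs with hmem
  · rw [rankOf_moveBefore_of_mem hmem]
    omega
  · rw [rankOf_moveBefore_of_notMem hvs (by simpa using hb) hmem]
    omega

open Classical in
theorem sum_passed_lt_ncard_passed [Fintype β] (hvs : r (inl v) (inr s)) :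
    ∑ b : β, (if inr b ∈ passed r s v then 1 else 0) < (passed r s v).ncard := by
  have hv : inl v ∈ passed r s v := ⟨hvs, irrefl_of r _⟩
  have hA : 0 < ∑ a : Fin n, if inl a ∈ passed r s v then 1 else 0 :=
    Finset.sum_pos' (by simp) ⟨v, Finset.mem_univ v, by simp [hv]⟩
  have hncard : (passed r s v).ncard = ∑ w, if w ∈ passed r s v then 1 else 0 := by
    simp [Set.ncard_eq_toFinset_card']
  rw [hncard, Fintype.sum_sum_type]
  exact Nat.lt_add_of_pos_left hA

theorem sum_segmentLengthB_moveBefore_lt [Fintype β] (hvs : r (inl v) (inr s))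
    (hsv : r (inl (one s)) (inl v)) :
    ∑ b, segmentLengthB one (moveBefore n β r s v) b < ∑ b, segmentLengthB one r b := by
  classical
  have hself := segmentLengthB_moveBefore_self_add (one := one) hvs hsv
  have hpassed := sum_passed_lt_ncard_passed hvs
  have hpassed_erase := Finset.sum_le_univ_sum_of_nonneg (s := Finset.univ.erase s)
    fun b : β => Nat.zero_le (if inr b ∈ passed r s v then 1 else 0)
  have hrest := Finset.sum_le_sum fun b (hb : b ∈ Finset.univ.erase s) =>
    segmentLengthB_moveBefore_le (one := one) hvs (Finset.ne_of_mem_erase hb)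
  rw [Finset.sum_add_distrib] at hrest
  rw [← Finset.add_sum_erase _ _ (Finset.mem_univ s),
    ← Finset.add_sum_erase _ (segmentLengthB one r) (Finset.mem_univ s)]
  omega

end Length

theorem rankOf_le_lastRank [Fintype β] {a : Fin n} {b : β} (hab : E a b) :
    rankOf n β r (inr b) ≤ lastRank E r a := by
  classical
  exact Finset.le_sup (f := fun b => rankOf n β r (inr b)) (by simpa using hab)

namespace IsMovableBefore

variable [Fintype β] {s : β} {v : Fin n}

-- The rank of a neighbor of `a` grows only if `b_s` jumps over it; then `b_s` also jumps over `a`,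
-- or `b_s` is a neighbor of `a` that was further to the right.
open Classical in
theorem lastRank_moveBefore_le (h : IsMovableBefore E r s v) (hr : IsAStickOrder n β E r)
    (a : Fin n) : lastRank E (moveBefore n β r s v) a ≤
      lastRank E r a + if inl a ∈ passed r s v then 1 else 0 := by
  have := hr.1.1
  refine Finset.sup_le fun b hb => ?_
  replace hb : E a b := by simpa using hb
  have hle := rankOf_le_lastRank (r := r) hb
  by_cases hbs : b = s
  · subst hbs
    rw [rankOf_moveBefore_self h.rel]
    exact Nat.le_add_right_of_le ((rankOf_lt_rankOf h.rel).le.trans hle)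
  by_cases hpb : inr b ∈ passed r s v
  · rw [rankOf_moveBefore_of_mem hpb]
    rcases lt_or_ge a v with hav | hva
    · have hvb := hr.rel_of_not_rel (by simp) hpb.2
      have has : E a s := h.edge b a hvb hpb.1 hav hb
      exact Nat.le_add_right_of_le ((rankOf_lt_rankOf hpb.1).trans_le (rankOf_le_lastRank has))
    · have hpa : inl a ∈ passed r s v :=
        ⟨hr.trans (hr.rel_of_edge hb) hpb.1, fun hav => (hr.lt_iff.1 hav).not_ge hva⟩
      simpa [hpa] using hle
  · rw [rankOf_moveBefore_of_notMem h.rel (by simpa using hbs) hpb]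
    exact Nat.le_add_right_of_le hle

theorem segmentLengthA_moveBefore_le (h : IsMovableBefore E r s v) (hr : IsAStickOrder n β E r)
    (a : Fin n) : segmentLengthA E (moveBefore n β r s v) a ≤ segmentLengthA E r a := by
  have := hr.1.1
  have hlast := h.lastRank_moveBefore_le hr a
  rw [segmentLengthA, segmentLengthA]
  split_ifs at hlast with hmem
  · rw [rankOf_moveBefore_of_mem hmem]
    omega
  · rw [rankOf_moveBefore_of_notMem h.rel (by simp) hmem]
    omega

theorem lengthOf_moveBefore_lt (h : IsMovableBefore E r s v) (hr : IsAStickOrder n β E r)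
    (hone : ∀ j, E (one j) j) :
    lengthOf n β E one (moveBefore n β r s v) < lengthOf n β E one r := by
  have := hr.1.1
  rw [lengthOf_eq_sum_add_sum, lengthOf_eq_sum_add_sum]
  have hsv : r (inl (one s)) (inl v) := hr.lt_iff.2 (h.lt _ (hone s))
  exact add_lt_add_of_lt_of_le (sum_segmentLengthB_moveBefore_lt h.rel hsv)
    (Finset.sum_le_sum fun a _ => h.segmentLengthA_moveBefore_le hr a)

end IsMovableBefore

theorem IsUnforcedPair.goodSwap [Fintype β] {t s : β} (h : IsUnforcedPair E k one r t s)
    (hr : IsAStickOrder n β E r) (hk : ∀ j, IsGreatest {i | E i j} (k j))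
    (hone : ∀ j, IsLeast {i | E i j} (one j)) (hN : NOverlap n β E)
    (hbetween : between r t s = ∅) : GoodSwap n β E one r t s := by
  have exists_isLeast {S : Set (Fin n)} (hS : S.Nonempty) : ∃ m, IsLeast S m := by
    simpa only [minimal_iff_isLeast] using WellFoundedLT.exists_minimal inferInstance S hS
  obtain ⟨c, hc⟩ := exists_isLeast (S := {i | E i t ∧ ¬ E i s})
    (h.exists_edge_left_not_right hr hN)
  obtain ⟨v, hv⟩ := exists_isLeast (S := {z | ReflTransGen (ChainStep E s) c z}) ⟨c, .refl⟩
  have hmov := h.isMovableBefore hr hk hone hN hbetween hc.1.1 hc.1.2 hv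
  exact ⟨v, isLimit_of_isLeast hc hv, hmov.isAStickOrder_moveBefore hr,
    hmov.lengthOf_moveBefore_lt hr fun j => (hone j).1⟩

end

theorem stmt14_general (n : ℕ) (β : Type) [Fintype β] (E : Fin n → β → Prop) (k : β → Fin n)
    (hk : ∀ j : β, E (k j) j ∧ ∀ i : Fin n, E i j → i ≤ k j)
    (one : β → Fin n)
    (hone : ∀ j : β, E (one j) j ∧ ∀ i : Fin n, E i j → one j ≤ i)
    (hN : NOverlap n β E)
    (r : (Fin n ⊕ β) → (Fin n ⊕ β) → Prop)
    (hr : IsAStickOrder n β E r)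
    (t s : β) (hts : r (inr t) (inr s))
    (h1 : one s ≤ one t)
    (hnp : ¬ Prec n β E k (inr t) (inr s)) :
    ∃ x y : β,
      (x = t ∨ r (inr t) (inr x)) ∧ r (inr x) (inr y) ∧ (y = s ∨ r (inr y) (inr s)) ∧
      (¬ ∃ u : β, r (inr x) (inr u) ∧ r (inr u) (inr y)) ∧
      GoodSwap n β E one r x y := by
  have hpair : IsUnforcedPair E k one r t s := ⟨hts, h1, hnp⟩
  obtain ⟨x, y, hx, hy, hxy, hbetween⟩ := hpair.exists_between_eq_empty hr hk hone hN
  exact ⟨x, y, hx, hxy.rel, hy, Set.not_nonempty_iff_eq_empty.2 hbetween,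
    hxy.goodSwap hr hk hone hN hbetween⟩

/-- Let `G` be an A-Stick N-overlap graph with no isolated vertices, `≺` an
A-Stick order of `G`, and `b_t ≺ b_s` in `B` with `1_s ≤ 1_t` and `b_t ≺° b_s` not holding.
Then either (a) some pair `b_x ≺ b_y`, consecutive among `B` with `b_t ⪯ b_x ≺ b_y ⪯ b_s`,
admits a good swap; or (b) there is `b_q` with `b_t ≺ b_q ≺ b_s`, `b_t ≺° b_q` and
`1_q < 1_s`. -/
theorem stmt14 (n : ℕ) (β : Type) [Fintype β] (E : Fin n → β → Prop) (k : β → Fin n)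
    (hk : ∀ j : β, E (k j) j ∧ ∀ i : Fin n, E i j → i ≤ k j)
    (one : β → Fin n)
    (hone : ∀ j : β, E (one j) j ∧ ∀ i : Fin n, E i j → one j ≤ i)
    (hN : NOverlap n β E)
    (hnoiso : ∀ a : Fin n, ∃ b : β, E a b)
    (r : (Fin n ⊕ β) → (Fin n ⊕ β) → Prop)
    (hr : IsAStickOrder n β E r)
    (t s : β) (hts : r (inr t) (inr s))
    (h1 : one s ≤ one t)
    (hnp : ¬ Prec n β E k (inr t) (inr s)) :
    (∃ x y : β,
        (x = t ∨ r (inr t) (inr x)) ∧ r (inr x) (inr y) ∧ (y = s ∨ r (inr y) (inr s)) ∧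
        (¬ ∃ u : β, r (inr x) (inr u) ∧ r (inr u) (inr y)) ∧
        GoodSwap n β E one r x y) ∨
    (∃ q : β, r (inr t) (inr q) ∧ r (inr q) (inr s) ∧
        Prec n β E k (inr t) (inr q) ∧ one q < one s) :=
  .inl (stmt14_general n β E k hk one hone hN r hr t s hts h1 hnp)
end

section
/- If G is an A-Stick N-overlap graph with no isolated vertices and ≺^c is its canonical order, then length(≺^c) ≤ length(≺) for every A-Stick order ≺ of G; that is, the canonical A-Stick representation has minimum total segment length among all A-Stick representations of G. -/
open Sum

/-- A canonical order for `G` (with `m j = max {i | a_i ≺° b_j}` given as a parameter):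
a linear (strict total) order on `A ∪ B` extending `≺°` in which every `b_j` is
left-optimal, i.e. `a_{m_j} ≺ b_j` and `b_j ≺ a_{m_j + 1}` whenever `m_j < n`. -/
def IsCanonicalOrder (n : ℕ) (β : Type) (E : Fin n → β → Prop) (k : β → Fin n)
    (m : β → Fin n) (r : (Fin n ⊕ β) → (Fin n ⊕ β) → Prop) : Prop :=
  IsStrictTotalOrder (Fin n ⊕ β) r ∧
  (∀ c d : Fin n ⊕ β, Prec n β E k c d → r c d) ∧
  ∀ j : β, r (inl (m j)) (inr j) ∧
    ∀ hlt : (m j : ℕ) + 1 < n, r (inr j) (inl ⟨(m j : ℕ) + 1, hlt⟩)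
/-!
Among A-Stick orders, the total length decreases when the `B`-vertices move left past `A`-vertices:
it suffices that `a ≺ b` in the first order implies `a ≺ b` in the second. The canonical order is an
A-Stick order, because whenever `a ≺° b` is a non-edge and `b` has a neighbor before `a`, rules (TB)
and (FB) already force every neighbor of `a` before `b`. It is leftmost in this sense because its
relations `a ≺ b` are exactly those forced by `≺°`.

The `B`-segments have total length `∑ rank b - ∑ rank a_{1_b}`. All ranks together have a sum that
depends only on the number of vertices, and moving `B` to the left increases the ranks of the
`A`-vertices, so `∑ rank b` decreases and `∑ rank a_{1_b}` increases. The `A`-segments shrink one by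
one: every vertex spanned by the segment of `a` in the first order is spanned by it in the second,
which is where the N-overlap property enters.
-/

section Rank

variable {V : Type*} (r : V → V → Prop) [IsStrictTotalOrder V r] [Finite V]

lemma ncard_setOf_rel_lt_iff {v w : V} :
    {u | r u v}.ncard < {u | r u w}.ncard ↔ r v w := by
  have lt_of_rel {v w : V} (h : r v w) : {u | r u v}.ncard < {u | r u w}.ncard :=
    Set.ncard_lt_ncard ⟨fun _ hu => trans_of r hu h, fun hsub => irrefl_of r v (hsub h)⟩
  refine ⟨fun hlt => ?_, lt_of_rel⟩
  rcases trichotomous_of r v w with h | rfl | h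
  · exact h
  · exact (lt_irrefl _ hlt).elim
  · exact (hlt.asymm (lt_of_rel h)).elim

lemma ncard_setOf_rel_tsub {a b : V} (hab : r a b) :
    {w | r w b}.ncard - {w | r w a}.ncard = {w | r a w ∧ ¬ r b w}.ncard := by
  have not_rel_eq (v : V) : {w | ¬ r v w} = insert v {w | r w v} := by
    ext w
    rcases trichotomous_of r v w with h | rfl | h
    · have hne : w ≠ v := fun he => irrefl_of r v (he ▸ h)
      simp [h, hne, asymm_of r h]
    · simp [irrefl_of r]
    · simp [h, asymm_of r h]
  have ncard_not_rel (v : V) : {w | ¬ r v w}.ncard = {w | r w v}.ncard + 1 := by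
    have hv : v ∉ {w | r w v} := irrefl_of r v
    rw [not_rel_eq, Set.ncard_insert_of_notMem hv]
  have hsub : {w | ¬ r a w} ⊆ {w | ¬ r b w} := fun w hw hbw => hw (trans_of r hab hbw)
  have hdiff : {w | r a w ∧ ¬ r b w} = {w | ¬ r b w} \ {w | ¬ r a w} := by
    ext w
    simp [and_comm]
  rw [hdiff, Set.ncard_sdiff hsub, ncard_not_rel, ncard_not_rel, Nat.add_sub_add_right]

lemma sup_ncard_setOf_rel_tsub {ι : Type*} {s : Finset ι} (hs : s.Nonempty) {f : ι → V} {a : V}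
    (ha : ∀ i ∈ s, r a (f i)) :
    (s.sup fun i => {w | r w (f i)}.ncard) - {w | r w a}.ncard =
      {w | r a w ∧ ∃ i ∈ s, ¬ r (f i) w}.ncard := by
  obtain ⟨i, hi, hsup⟩ := s.exists_mem_eq_sup hs fun i => {w | r w (f i)}.ncard
  have hmax : ∀ j ∈ s, ¬ r (f i) (f j) := fun j hj hij =>
    ((ncard_setOf_rel_lt_iff r).2 hij).not_ge
      (hsup ▸ Finset.le_sup (f := fun i => {w | r w (f i)}.ncard) hj)
  have hlast (w : V) : (∃ j ∈ s, ¬ r (f j) w) ↔ ¬ r (f i) w := by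
    refine ⟨fun ⟨j, hj, hjw⟩ hiw => ?_, fun hiw => ⟨i, hi, hiw⟩⟩
    rcases trichotomous_of r (f i) (f j) with h | h | h
    · exact hmax j hj h
    · exact hjw (h ▸ hiw)
    · exact hjw (trans_of r h hiw)
  simp only [hsup, hlast, ncard_setOf_rel_tsub r (ha i hi)]

end Rank

lemma sum_ncard_setOf_rel {V : Type*} [Fintype V] (r : V → V → Prop) [IsStrictTotalOrder V r] :
    ∑ v, {w | r w v}.ncard = ∑ i ∈ Finset.range (Fintype.card V), i := by
  classical
  let rank (v : V) : ℕ := {w | r w v}.ncard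
  have hinj : Function.Injective rank := fun v w hvw => by
    rcases trichotomous_of r v w with h | h | h
    · exact (((ncard_setOf_rel_lt_iff r).2 h).ne hvw).elim
    · exact h
    · exact (((ncard_setOf_rel_lt_iff r).2 h).ne' hvw).elim
  have hrange : Finset.univ.image rank = Finset.range (Fintype.card V) := by
    refine Finset.eq_of_subset_of_card_le (fun i hi => ?_) ?_
    · obtain ⟨v, -, rfl⟩ := Finset.mem_image.1 hi
      rw [Finset.mem_range, ← Nat.card_eq_fintype_card]
      exact Set.ncard_lt_card ((Set.ne_univ_iff_exists_notMem _).2 ⟨v, irrefl_of r v⟩)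
    · rw [Finset.card_image_of_injective _ hinj, Finset.card_range, Finset.card_univ]
  rw [← hrange, Finset.sum_image hinj.injOn]

section Orders

variable {n : ℕ} {β : Type} {E : Fin n → β → Prop}

/-- The set of vertices spanned by the segment of `a ∈ A` in the Stick representation with origin
order `r`: those after `a`, up to and including the last neighbor of `a`. Its cardinality is the
length of the segment. -/
def segmentSpan (E : Fin n → β → Prop) (r : Fin n ⊕ β → Fin n ⊕ β → Prop) (a : Fin n) :
    Set (Fin n ⊕ β) :=
  {w | r (inl a) w ∧ ∃ b, E a b ∧ ¬ r (inr b) w}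

namespace IsAStickOrder

variable {r r₁ r₂ : Fin n ⊕ β → Fin n ⊕ β → Prop}

lemma inr_rel_inr_of_not_edge (hr : IsAStickOrder n β E r) {s t : Fin n} {h j : β} (hst : s < t)
    (htj : r (inl t) (inr j)) (hsj : E s j) (hntj : ¬ E t j) (hth : E t h) :
    r (inr h) (inr j) := by
  obtain ⟨⟨_, -, hforbidden⟩, hord⟩ := hr
  rcases trichotomous_of r (inr h) (inr j) with hhj | hhj | hjh
  · exact hhj
  · exact (hntj (inr_injective hhj ▸ hth)).elim
  · exact (hforbidden ⟨t, s, j, h, (hord s t).2 hst, htj, hjh, hsj, hth, hntj⟩).elim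

lemma rankOf_inl_le [Finite β] (h₁ : IsAStickOrder n β E r₁) (h₂ : IsAStickOrder n β E r₂)
    (hleft : ∀ i j, r₁ (inl i) (inr j) → r₂ (inl i) (inr j)) (a : Fin n) :
    rankOf n β r₂ (inl a) ≤ rankOf n β r₁ (inl a) := by
  have := h₁.1.1
  have := h₂.1.1
  refine Set.ncard_le_ncard ?_
  rintro (i | j) hw
  · exact (h₁.2 i a).2 ((h₂.2 i a).1 hw)
  · rcases trichotomous_of r₁ (inr j) (inl a) with hja | hja | haj
    · exact hja
    · exact (inr_ne_inl hja).elim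
    · exact (asymm_of r₂ hw (hleft a j haj)).elim

lemma sum_rankOf_inr_le [Fintype β] (h₁ : IsAStickOrder n β E r₁) (h₂ : IsAStickOrder n β E r₂)
    (hleft : ∀ i j, r₁ (inl i) (inr j) → r₂ (inl i) (inr j)) :
    ∑ b, rankOf n β r₁ (inr b) ≤ ∑ b, rankOf n β r₂ (inr b) := by
  have := h₁.1.1
  have := h₂.1.1
  have htotal : ∑ v, rankOf n β r₁ v = ∑ v, rankOf n β r₂ v :=
    (sum_ncard_setOf_rel r₁).trans (sum_ncard_setOf_rel r₂).symm
  have hinl : ∑ a, rankOf n β r₂ (inl a) ≤ ∑ a, rankOf n β r₁ (inl a) :=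
    Finset.sum_le_sum fun a _ => h₁.rankOf_inl_le h₂ hleft a
  rw [Fintype.sum_sum_type, Fintype.sum_sum_type] at htotal
  omega

lemma lengthOf_eq [Fintype β] (hr : IsAStickOrder n β E r) {one : β → Fin n}
    (hone : ∀ b, E (one b) b) (hnoiso : ∀ a, ∃ b, E a b) :
    lengthOf n β E one r =
      ∑ b, rankOf n β r (inr b) - ∑ b, rankOf n β r (inl (one b)) +
        ∑ a, (segmentSpan E r a).ncard := by
  classical
  obtain ⟨⟨_, hedge, -⟩, -⟩ := hr
  unfold lengthOf
  congr 1
  · exact Finset.sum_tsub_distrib _ fun b _ =>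
      ((ncard_setOf_rel_lt_iff r).2 (hedge _ _ (hone b))).le
  · refine Finset.sum_congr rfl fun a _ => ?_
    have hne : (Finset.univ.filter (E a)).Nonempty := by
      simpa [Finset.filter_nonempty_iff] using hnoiso a
    have hlength := sup_ncard_setOf_rel_tsub r (f := inr) (a := inl a) hne
      fun b hb => hedge a b (Finset.mem_filter.1 hb).2
    simp only [Finset.mem_filter, Finset.mem_univ, true_and] at hlength
    exact hlength

lemma segmentSpan_subset (hN : NOverlap n β E) (h₁ : IsAStickOrder n β E r₁)
    (h₂ : IsAStickOrder n β E r₂) (hleft : ∀ i j, r₁ (inl i) (inr j) → r₂ (inl i) (inr j))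
    (a : Fin n) : segmentSpan E r₁ a ⊆ segmentSpan E r₂ a := by
  have := h₁.1.1
  have := h₂.1.1
  rintro (i | h) ⟨haw, b, hab, hbw⟩
  · have hib : r₁ (inl i) (inr b) :=
      ((trichotomous_of r₁ _ _).resolve_left hbw).resolve_left inr_ne_inl
    exact ⟨(h₂.2 a i).2 ((h₁.2 a i).1 haw), b, hab, asymm_of r₂ (hleft i b hib)⟩
  · refine ⟨hleft a h haw, ?_⟩
    by_contra! hafter
    have hnah : ¬ E a h := fun hah => irrefl_of r₂ _ (hafter h hah)
    have hhb : h ≠ b := by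
      rintro rfl
      exact hnah hab
    obtain ⟨t, hth, hntb⟩ : ∃ t, E t h ∧ ¬ E t b := by simpa using hN h b hhb
    rcases lt_trichotomy t a with hta | rfl | hat
    · exact hbw (h₁.inr_rel_inr_of_not_edge hta haw hth hnah hab)
    · exact hnah hth
    · have hhb₁ : r₁ (inr h) (inr b) :=
        ((trichotomous_of r₁ _ _).resolve_left hbw).resolve_left fun he =>
          hhb (inr_injective he).symm
      have htb₂ : r₂ (inl t) (inr b) := hleft t b (trans_of r₁ (h₁.1.2.1 t h hth) hhb₁)
      exact asymm_of r₂ (hafter b hab) (h₂.inr_rel_inr_of_not_edge hat htb₂ hab hntb hth)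

theorem lengthOf_le_lengthOf [Fintype β] (hN : NOverlap n β E) {one : β → Fin n}
    (hone : ∀ b, E (one b) b) (hnoiso : ∀ a, ∃ b, E a b) (h₁ : IsAStickOrder n β E r₁)
    (h₂ : IsAStickOrder n β E r₂) (hleft : ∀ i j, r₁ (inl i) (inr j) → r₂ (inl i) (inr j)) :
    lengthOf n β E one r₁ ≤ lengthOf n β E one r₂ := by
  rw [h₁.lengthOf_eq hone hnoiso, h₂.lengthOf_eq hone hnoiso]
  refine Nat.add_le_add (tsub_le_tsub ?_ ?_) (Finset.sum_le_sum fun a _ => ?_)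
  · exact h₁.sum_rankOf_inr_le h₂ hleft
  · exact Finset.sum_le_sum fun b _ => h₁.rankOf_inl_le h₂ hleft (one b)
  · exact Set.ncard_le_ncard (segmentSpan_subset hN h₁ h₂ hleft a)

lemma rel_of_prec {k : β → Fin n} (hk : ∀ j, IsGreatest {i | E i j} (k j))
    (hr : IsAStickOrder n β E r) {p q : Fin n ⊕ β} (hpq : Prec n β E k p q) : r p q := by
  obtain ⟨⟨_, hedge, -⟩, hord⟩ := id hr
  induction hpq with
  | O hij => exact (hord _ _).2 hij
  | A htj => exact hedge _ _ htj
  | TB hst htk hsj hntj hth =>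
    have htj := trans_of r ((hord _ _).2 htk) (hedge _ _ (hk _).1)
    exact hr.inr_rel_inr_of_not_edge hst htj hsj hntj hth
  | FB _ hkt htw hth hwj =>
    have htj := trans_of r (hedge _ _ htw) hwj
    exact hr.inr_rel_inr_of_not_edge hkt htj (hk _).1 (fun h => hkt.not_ge ((hk _).2 h)) hth
  | T _ _ hpq hqs => exact trans_of r hpq hqs

end IsAStickOrder

variable {k : β → Fin n}

namespace Prec

lemma sumLex {p q : Fin n ⊕ β} (hpq : Prec n β E k p q) :
    Sum.Lex (· < ·) (fun _ _ : β => True) p q := by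
  have : IsTrans β fun _ _ => True := ⟨fun _ _ _ _ _ => trivial⟩
  induction hpq with
  | O hij => exact .inl hij
  | A => exact .sep _ _
  | TB => exact .inr trivial
  | FB => exact .inr trivial
  | T _ _ hpq hqs => exact trans_of _ hpq hqs

lemma lt_of_inl_inl {i j : Fin n} (hij : Prec n β E k (inl i) (inl j)) : i < j :=
  lex_inl_inl.1 hij.sumLex

lemma not_inr_inl {w : β} {i : Fin n} : ¬ Prec n β E k (inr w) (inl i) :=
  fun h => lex_inr_inl h.sumLex

lemma exists_edge_of_inl_inr {i : Fin n} {j : β} (hij : Prec n β E k (inl i) (inr j)) :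
    ∃ t w, i ≤ t ∧ E t w ∧ (w = j ∨ Prec n β E k (inr w) (inr j)) := by
  generalize hp : inl i = p, hq : inr j = q at hij
  induction hij generalizing i j with
  | O => cases hq
  | A htj => cases hp; cases hq; exact ⟨_, _, le_rfl, htj, .inl rfl⟩
  | TB => cases hp
  | FB => cases hp
  | @T _ v _ hiv hvj hiv_ih hvj_ih =>
    subst hp hq
    rcases v with v | v
    · obtain ⟨t, w, hvt, htw, hwj⟩ := hvj_ih rfl rfl
      exact ⟨t, w, hiv.lt_of_inl_inl.le.trans hvt, htw, hwj⟩
    · obtain ⟨t, w, hit, htw, rfl | hwv⟩ := hiv_ih rfl rfl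
      · exact ⟨t, w, hit, htw, .inr hvj⟩
      · exact ⟨t, w, hit, htw, .inr (.T hwv hvj)⟩

lemma inr_inr_of_edge_lt (hk : ∀ j, IsGreatest {i | E i j} (k j)) {s u : Fin n} {w j h : β}
    (hwj : Prec n β E k (inr w) (inr j)) (hsw : E s w) (hsu : s < u) (huw : u ≤ k w)
    (hju : k j < u) (huh : E u h) : Prec n β E k (inr h) (inr j) := by
  by_cases hE : E u w
  · exact .FB hwj hju hE huh
  · have hne : u ≠ k w := fun he => hE (he ▸ (hk w).1)
    exact .T (.TB hsu (lt_of_le_of_ne huw hne) hsw hE huh) hwj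

lemma inr_inr_of_le_max (hk : ∀ j, IsGreatest {i | E i j} (k j)) {u : Fin n} {w j h : β}
    (hwj : Prec n β E k (inr w) (inr j)) (hju : k j < u) (huw : u ≤ k w) (huh : E u h) :
    Prec n β E k (inr h) (inr j) := by
  generalize hp : inr w = p, hq : inr j = q at hwj
  induction hwj generalizing w j h with
  | O => cases hp
  | A => cases hp
  | TB hst htj hsj hntj htw =>
    cases hp; cases hq
    exact inr_inr_of_edge_lt hk (.TB hst htj hsj hntj htw) htw (htj.trans hju) huw hju huh
  | @FB t w' _ _ hw'j hjt htw' htw ih =>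
    cases hp; cases hq
    rcases le_or_gt u (k w') with huw' | hw'u
    · exact ih hju huw' huh rfl rfl
    · exact inr_inr_of_edge_lt hk (.FB hw'j hjt htw' htw) htw (((hk w').2 htw').trans_lt hw'u)
        huw hju huh
  | @T _ v _ hwv hvj ihwv ihvj =>
    cases hp; cases hq
    rcases v with i | v
    · exact (not_inr_inl hwv).elim
    · rcases le_or_gt u (k v) with huv | hvu
      · exact ihvj hju huv huh rfl rfl
      · exact .T (ihwv hvu huw huh rfl rfl) hvj

lemma inr_inr_of_not_edge (hk : ∀ j, IsGreatest {i | E i j} (k j)) {i s : Fin n} {h j : β}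
    (hij : Prec n β E k (inl i) (inr j)) (hsi : s < i) (hsj : E s j) (hnij : ¬ E i j)
    (hih : E i h) : Prec n β E k (inr h) (inr j) := by
  rcases lt_trichotomy i (k j) with hlt | rfl | hgt
  · exact .TB hsi hlt hsj hnij hih
  · exact (hnij (hk j).1).elim
  · obtain ⟨t, w, hit, htw, rfl | hwj⟩ := hij.exists_edge_of_inl_inr
    · exact (hgt.not_ge (hit.trans ((hk w).2 htw))).elim
    · exact hwj.inr_inr_of_le_max hk hgt (hit.trans ((hk w).2 htw)) hih

end Prec

namespace IsCanonicalOrder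

variable {m : β → Fin n} {r : Fin n ⊕ β → Fin n ⊕ β → Prop}

lemma inl_rel_inl_iff (hr : IsCanonicalOrder n β E k m r) {i j : Fin n} :
    r (inl i) (inl j) ↔ i < j := by
  obtain ⟨_, hext, -⟩ := hr
  refine ⟨fun hij => ?_, fun hij => hext _ _ (.O hij)⟩
  by_contra! hji
  rcases hji.eq_or_lt with rfl | hji
  · exact irrefl_of r _ hij
  · exact asymm_of r hij (hext _ _ (.O hji))

lemma inl_rel_inr_iff (hm : ∀ j, Prec n β E k (inl (m j)) (inr j))
    (hr : IsCanonicalOrder n β E k m r) {i : Fin n} {j : β} :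
    r (inl i) (inr j) ↔ Prec n β E k (inl i) (inr j) := by
  obtain ⟨_, hext, hopt⟩ := id hr
  refine ⟨fun hij => ?_, hext _ _⟩
  rcases lt_trichotomy i (m j) with him | rfl | hmi
  · exact .T (.O him) (hm j)
  · exact hm j
  · have hlt : (m j : ℕ) + 1 < n := (Nat.succ_le_of_lt hmi).trans_lt i.isLt
    have hjm : r (inr j) (inl ⟨m j + 1, hlt⟩) := (hopt j).2 hlt
    have him : (i : ℕ) < m j + 1 := hr.inl_rel_inl_iff.1 (trans_of r hij hjm)
    exact (Nat.not_lt_of_ge (Nat.succ_le_of_lt hmi) him).elim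

lemma isAStickOrder (hk : ∀ j, IsGreatest {i | E i j} (k j))
    (hm : ∀ j, Prec n β E k (inl (m j)) (inr j)) (hr : IsCanonicalOrder n β E k m r) :
    IsAStickOrder n β E r := by
  obtain ⟨hto, hext, -⟩ := id hr
  refine ⟨⟨hto, fun a b hab => hext _ _ (.A hab), ?_⟩, fun i j => hr.inl_rel_inl_iff⟩
  rintro ⟨a, a', b, b', ha'a, hab, hbb', ha'b, hab', hnab⟩
  have hb'b : Prec n β E k (inr b') (inr b) :=
    ((hr.inl_rel_inr_iff hm).1 hab).inr_inr_of_not_edge hk (hr.inl_rel_inl_iff.1 ha'a) ha'b hnab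
      hab'
  exact asymm_of r hbb' (hext _ _ hb'b)

end IsCanonicalOrder

end Orders

/-- If `G` is an A-Stick N-overlap graph with no isolated vertices and
`≺^c` is its canonical order, then `length(≺^c) ≤ length(≺)` for every A-Stick order `≺` of
`G`: the canonical A-Stick representation has minimum total segment length. -/
theorem stmt16 (n : ℕ) (β : Type) [Fintype β] (E : Fin n → β → Prop) (k : β → Fin n)
    (hk : ∀ j : β, E (k j) j ∧ ∀ i : Fin n, E i j → i ≤ k j)
    (one : β → Fin n)
    (hone : ∀ j : β, E (one j) j ∧ ∀ i : Fin n, E i j → one j ≤ i)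
    (m : β → Fin n)
    (hm : ∀ j : β, Prec n β E k (inl (m j)) (inr j) ∧
      ∀ i : Fin n, Prec n β E k (inl i) (inr j) → i ≤ m j)
    (hA : ∃ r, IsAStickOrder n β E r)
    (hN : NOverlap n β E)
    (hnoiso : ∀ a : Fin n, ∃ b : β, E a b)
    (rc : (Fin n ⊕ β) → (Fin n ⊕ β) → Prop)
    (hrc : IsCanonicalOrder n β E k m rc) :
    ∀ r, IsAStickOrder n β E r → lengthOf n β E one rc ≤ lengthOf n β E one r := by
  intro r hr
  have hk' (j : β) : IsGreatest {i | E i j} (k j) := ⟨(hk j).1, fun i => (hk j).2 i⟩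
  have hrc' : IsAStickOrder n β E rc := hrc.isAStickOrder hk' fun j => (hm j).1
  have hleft (i : Fin n) (j : β) (hij : rc (inl i) (inr j)) : r (inl i) (inr j) :=
    hr.rel_of_prec hk' ((hrc.inl_rel_inr_iff fun j => (hm j).1).1 hij)
  exact hrc'.lengthOf_le_lengthOf hN (fun b => (hone b).1) hnoiso hr hleft
end
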